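/- arXiv:1611.00265 — 2 statements merged into one kernel-verified Lean document; each statement's English description precedes it below -/
import Mathlib

section
/- Let X be a pseudo-metric space. The following conditions are equivalent: (1) there is a set A such that X coarsely embeds in ℓ¹(A); (2) there is a constant c > 0 such that for all R, ε > 0 there is S > 0 with the property that for any T > S there exist a set C and a function f from X to the unit sphere of ℓ¹(C) such that ‖f(x) − f(y)‖₁ ≤ ε whenever d(x,y) ≤ R, and ‖f(x) − f(y)‖₁ ≥ c whenever S ≤ d(x,y) ≤ T. -/
/-- A coarse embedding with respect to given distance functions: there are non-decreasing
`ρ₋, ρ₊` with `ρ₋ → ∞` such that `ρ₋(d(x,y)) ≤ d(f x, f y) ≤ ρ₊(d(x,y))`. -/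
def CoarseEmbedD {Y Z : Type} (dY : Y → Y → ℝ) (dZ : Z → Z → ℝ) (f : Y → Z) : Prop :=
  ∃ ρm ρp : ℝ → ℝ, Monotone ρm ∧ Monotone ρp ∧
    Filter.Tendsto ρm Filter.atTop Filter.atTop ∧
    ∀ x y : Y, ρm (dY x y) ≤ dZ (f x) (f y) ∧ dZ (f x) (f y) ≤ ρp (dY x y)

/-!
`ℓ¹` is Hilbertian up to a square root and a change of scale: `|r| + |s| - |r - s|` is twice the
length of `[0, r] ∩ [0, s]`, hence a positive semidefinite kernel, so by Schoenberg's argument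
`exp (-t ‖f x - f y‖₁)` is positive semidefinite for every `t ≥ 0`. It is the Gram kernel of unit
vectors of some `ℓ²(C)`, which the Mazur map carries to the unit sphere of `ℓ¹(C)` while distorting
distances in a controlled way. If `f` is a coarse embedding, a small `t` makes the images of
`R`-close points `ε`-close, while those of points so far apart that `t ‖f x - f y‖₁ ≥ 1` stay at
distance at least `1 - e⁻¹`.

Conversely, take sphere-valued maps `Fₙ` with parameters `R = n + 1`, `ε = 2⁻ⁿ / (n + 1)` whose
windows `[Sₙ, Tₙ]` contain the intervals `[tₙ, tₙ₊₁]` of a sequence `tₙ → ∞`, and map `x` to the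
direct sum of `(n + 1) (Fₙ x - Fₙ x₀)`. At bounded distance all but finitely many terms are
dominated by `2⁻ⁿ`, while a distance in `[tₙ, tₙ₊₁]` contributes at least `(n + 1) c`.
-/

open Filter MeasureTheory Matrix Set
open scoped InnerProductSpace Interval

universe u

section PosSemidef

variable {X : Type*}

theorem isClosed_setOf_posSemidef {R : Type*} [Ring R] [PartialOrder R] [StarRing R]
    [TopologicalSpace R] [IsTopologicalRing R] [ContinuousStar R] [OrderClosedTopology R] :
    IsClosed {K : Matrix X X R | K.PosSemidef} := by
  refine (isClosed_eq continuous_id.matrix_conjTranspose continuous_id).inter ?_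
  change IsClosed {K : Matrix X X R | ∀ v : X →₀ R, 0 ≤ v.sum _}
  rw [ofPred_forall]
  refine isClosed_iInter fun v => isClosed_le continuous_const ?_
  exact continuous_finsetSum _ fun i _ => continuous_finsetSum _ fun j _ =>
    ((continuous_const.mul (continuous_id.matrix_elem i j)).mul continuous_const)

theorem posSemidef_of_hasSum {ι R : Type*} [Ring R] [PartialOrder R] [StarRing R]
    [AddLeftMono R] [TopologicalSpace R] [IsTopologicalRing R] [ContinuousStar R]
    [OrderClosedTopology R] {f : ι → Matrix X X R} {K : Matrix X X R}
    (hf : ∀ i, (f i).PosSemidef) (hK : ∀ x y, HasSum (fun i => f i x y) (K x y)) :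
    K.PosSemidef :=
  have hK : HasSum f K := Pi.hasSum.2 fun x => Pi.hasSum.2 (hK x)
  isClosed_setOf_posSemidef.mem_of_tendsto hK <|
    .of_forall fun s => posSemidef_sum s fun i _ => hf i

-- `Matrix.posSemidef_gram` requires a finite index type.
open scoped ComplexOrder in
theorem gram_posSemidef {𝕜 H : Type*} [RCLike 𝕜] [SeminormedAddCommGroup H] [InnerProductSpace 𝕜 H]
    (ψ : X → H) : (gram 𝕜 ψ).PosSemidef := by
  refine ⟨isHermitian_gram 𝕜 ψ, fun v => ?_⟩
  have hnonneg : (0 : 𝕜) ≤ (‖v.sum fun x a => a • ψ x‖ : 𝕜) ^ 2 := by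
    exact_mod_cast sq_nonneg ‖v.sum fun x a => a • ψ x‖
  calc (0 : 𝕜) ≤ (‖v.sum fun x a => a • ψ x‖ : 𝕜) ^ 2 := hnonneg
    _ = ⟪v.sum fun x a => a • ψ x, v.sum fun x a => a • ψ x⟫_𝕜 :=
      (inner_self_eq_norm_sq_to_K _).symm
    _ = v.sum fun x a => v.sum fun y b => star a * gram 𝕜 ψ x y * b := by
      simp only [Finsupp.sum, sum_inner, inner_sum, inner_smul_left, inner_smul_right,
        Finset.mul_sum, gram_apply, starRingEnd_apply, mul_comm]
      exact Finset.sum_comm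

open scoped ComplexOrder in
theorem posSemidef_map_pow {𝕜 : Type*} [RCLike 𝕜] {K : Matrix X X 𝕜} (hK : K.PosSemidef) (n : ℕ) :
    (K.map (· ^ n)).PosSemidef := by
  induction n with
  | zero =>
    have hone : K.map (· ^ 0) = gram 𝕜 fun _ : X => (1 : 𝕜) := by ext; simp
    exact hone ▸ gram_posSemidef _
  | succ n ih =>
    have hsucc : K.map (· ^ (n + 1)) = K.map (· ^ n) ⊙ K := by ext; simp [pow_succ]
    exact hsucc ▸ ih.hadamard hK

theorem posSemidef_map_exp {K : Matrix X X ℝ} (hK : K.PosSemidef) :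
    (K.map Real.exp).PosSemidef := by
  have hexp (z : ℝ) : HasSum (fun n : ℕ => (n.factorial : ℝ)⁻¹ * z ^ n) (Real.exp z) := by
    simpa [Real.exp_eq_exp_ℝ] using NormedSpace.exp_series_hasSum_exp' (𝕂 := ℝ) z
  refine posSemidef_of_hasSum (f := fun n : ℕ => (n.factorial : ℝ)⁻¹ • K.map (· ^ n))
    (fun n => (posSemidef_map_pow hK n).smul ?_) fun x y => hexp (K x y)
  positivity

theorem posSemidef_exp_neg {N : X → ℝ} {δ : X → X → ℝ}
    (h : (of fun x y => N x + N y - δ x y).PosSemidef) :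
    (of fun x y => Real.exp (-δ x y)).PosSemidef := by
  have hexp : of (fun x y => Real.exp (-δ x y)) =
      (of fun x y => N x + N y - δ x y).map Real.exp ⊙ gram ℝ fun x => Real.exp (-N x) := by
    ext x y
    simp only [of_apply, hadamard_apply, map_apply, gram_apply, Real.inner_apply, ← Real.exp_add]
    ring_nf
  exact hexp ▸ (posSemidef_map_exp h).hadamard (gram_posSemidef _)

theorem exists_lp_inner_eq {X : Type u} {K : Matrix X X ℝ} (hK : K.PosSemidef) :
    ∃ (ι : Type u) (ψ : X → lp (fun _ : ι => ℝ) 2), ∀ x y, ⟪ψ x, ψ y⟫_ℝ = K x y := by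
  -- `RKHS.OfKernel` takes kernels with values in operators.
  let K' : Matrix X X (ℝ →L[ℝ] ℝ) := K.map fun r => r • (1 : ℝ →L[ℝ] ℝ)
  have hK' : K'.PosSemidef := by
    refine (RKHS.posSemidef_tfae.out 0 2).2 (And.intro ?_ fun v => ?_)
    · ext x y
      simp [K', ← hK.1.apply x y]
    · have := hK.2 v
      rw [Finsupp.sum_comm] at this
      simpa [K', mul_comm, mul_assoc, mul_left_comm] using this
  have : Fact K'.PosSemidef := ⟨hK'⟩
  obtain ⟨ι, b, -⟩ := exists_hilbertBasis ℝ (RKHS.OfKernel K')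
  refine ⟨ι, fun x => b.repr (RKHS.kerFun (RKHS.OfKernel K') x 1), fun x y => ?_⟩
  rw [b.repr.inner_map_map, real_inner_comm, ← RKHS.kernel_inner, RKHS.OfKernel.kernel_ofKernel]
  simp [K']

end PosSemidef

section L1

/-- The `ℓ¹`-distance of two functions, with junk value `0` if their difference is not summable. -/
noncomputable def l1Dist {A : Type*} (u v : A → ℝ) : ℝ := ∑' a, |u a - v a|

theorem l1Dist_nonneg {A : Type*} (u v : A → ℝ) : 0 ≤ l1Dist u v :=
  tsum_nonneg fun _ => abs_nonneg _

theorem l1Dist_le_add {A : Type*} {u v : A → ℝ} (hu : Summable u) (hv : Summable v) :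
    l1Dist u v ≤ ∑' a, |u a| + ∑' a, |v a| := by
  rw [← hu.abs.tsum_add hv.abs]
  exact (hu.sub hv).abs.tsum_le_tsum (fun a => abs_sub _ _) (hu.abs.add hv.abs)

theorem l1Dist_smul {A : Type*} (r : ℝ) (u v : A → ℝ) :
    l1Dist (r • u) (r • v) = |r| * l1Dist u v := by
  simp only [l1Dist, Pi.smul_apply, smul_eq_mul, ← mul_sub, abs_mul, tsum_mul_left]

theorem two_mul_volume_real_uIoc_inter_uIoc (r s : ℝ) :
    2 * volume.real (Ι 0 r ∩ Ι 0 s) = |r| + |s| - |r - s| := by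
  rw [uIoc, uIoc, Ioc_inter_Ioc, Real.volume_real_Ioc]
  grind

theorem posSemidef_abs_add_abs_sub_abs_sub :
    (of fun r s : ℝ => |r| + |s| - |r - s|).PosSemidef := by
  have hgram : (of fun r s : ℝ => |r| + |s| - |r - s|) = (2 : ℝ) • gram ℝ fun r =>
      indicatorConstLp 2 (μ := volume) (measurableSet_uIoc (a := 0) (b := r)) (by simp)
        (1 : ℝ) := by
    ext r s
    rw [Matrix.smul_apply, gram_apply, L2.real_inner_indicatorConstLp_one_indicatorConstLp_one
      measurableSet_uIoc measurableSet_uIoc (by simp) (by simp), smul_eq_mul,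
      two_mul_volume_real_uIoc_inter_uIoc, of_apply]
  exact hgram ▸ (gram_posSemidef _).smul zero_le_two

variable {X A : Type*} {f : X → A → ℝ}

theorem posSemidef_tsum_abs_add_tsum_abs_sub_l1Dist (hf : ∀ x, Summable (f x)) :
    (of fun x y => ∑' a, |f x a| + ∑' a, |f y a| - l1Dist (f x) (f y)).PosSemidef :=
  posSemidef_of_hasSum
    (fun a => posSemidef_abs_add_abs_sub_abs_sub.submatrix fun x => f x a) fun x y =>
    ((hf x).abs.hasSum.add (hf y).abs.hasSum).sub ((hf x).sub (hf y)).abs.hasSum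

theorem posSemidef_exp_neg_mul_l1Dist (hf : ∀ x, Summable (f x)) {t : ℝ} (ht : 0 ≤ t) :
    (of fun x y => Real.exp (-(t * l1Dist (f x) (f y)))).PosSemidef := by
  refine posSemidef_exp_neg (N := fun x => t * ∑' a, |f x a|) ?_
  convert (posSemidef_tsum_abs_add_tsum_abs_sub_l1Dist hf).smul ht using 1
  ext x y
  simp only [of_apply, Matrix.smul_apply, smul_eq_mul]
  ring

end L1

section Mazur

/-- The Mazur map `ℓ² → ℓ¹`, `u ↦ sign(u) |u|²` coordinatewise. -/
def mazurMap {ι : Type*} (u : ι → ℝ) : ι → ℝ := fun i => u i * |u i|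

theorem abs_mul_abs_sub_mul_abs_le (a b : ℝ) : |a * |a| - b * (|b|)| ≤ |a - b| * (|a| + |b|) :=
  calc |a * |a| - b * (|b|)| = |(a - b) * |a| + b * (|a| - |b|)| := by ring_nf
    _ ≤ |a - b| * |a| + |b| * |(|a| - |b|)| := by
      simpa only [abs_mul, abs_abs] using abs_add_le ((a - b) * |a|) (b * (|a| - |b|))
    _ ≤ |a - b| * |a| + |b| * |a - b| :=
      add_le_add_right (mul_le_mul_of_nonneg_left (abs_abs_sub_abs_le a b) (abs_nonneg b)) _
    _ = |a - b| * (|a| + |b|) := by ring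

theorem sq_sub_div_two_le_abs_mul_abs_sub (a b : ℝ) :
    (a - b) ^ 2 / 2 ≤ |a * |a| - b * (|b|)| := by
  wlog h : b ≤ a generalizing a b
  · rw [abs_sub_comm, sub_sq_comm]
    exact this b a (le_of_not_ge h)
  refine le_trans ?_ (le_abs_self _)
  rcases le_total 0 a with ha | ha <;> rcases le_total 0 b with hb | hb <;>
    simp only [abs_of_nonneg, abs_of_nonpos, ha, hb] <;> nlinarith [sq_nonneg (a + b)]

variable {ι : Type*}

theorem hasSum_sq_lp_two (u : lp (fun _ : ι => ℝ) 2) : HasSum (fun i => u i ^ 2) (‖u‖ ^ 2) := by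
  simpa using lp.hasSum_inner (𝕜 := ℝ) u u

theorem hasSum_abs_mazurMap (u : lp (fun _ : ι => ℝ) 2) :
    HasSum (fun i => |mazurMap u i|) (‖u‖ ^ 2) := by
  simpa [mazurMap, ← sq] using hasSum_sq_lp_two u

theorem summable_mazurMap (u : lp (fun _ : ι => ℝ) 2) : Summable (mazurMap u) :=
  (hasSum_abs_mazurMap u).summable.of_abs

theorem l1Dist_mazurMap_le (u v : lp (fun _ : ι => ℝ) 2) :
    l1Dist (mazurMap u) (mazurMap v) ≤ ‖u - v‖ * (‖u‖ + ‖v‖) := by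
  have hconj : (ENNReal.toReal 2).HolderConjugate (ENNReal.toReal 2) := by
    simpa using Real.HolderConjugate.two_two
  obtain ⟨hu, hu_le⟩ := lp.tsum_mul_le_mul_norm hconj (u - v) u
  obtain ⟨hv, hv_le⟩ := lp.tsum_mul_le_mul_norm hconj (u - v) v
  calc l1Dist (mazurMap u) (mazurMap v)
      ≤ ∑' i, (‖(u - v) i‖ * ‖u i‖ + ‖(u - v) i‖ * ‖v i‖) :=
        ((summable_mazurMap u).sub (summable_mazurMap v)).abs.tsum_le_tsum
          (fun i => (abs_mul_abs_sub_mul_abs_le (u i) (v i)).trans_eq (mul_add _ _ _)) (hu.add hv)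
    _ ≤ ‖u - v‖ * ‖u‖ + ‖u - v‖ * ‖v‖ := by
        rw [hu.tsum_add hv]
        exact add_le_add hu_le hv_le
    _ = ‖u - v‖ * (‖u‖ + ‖v‖) := (mul_add _ _ _).symm

theorem sq_norm_sub_div_two_le_l1Dist_mazurMap (u v : lp (fun _ : ι => ℝ) 2) :
    ‖u - v‖ ^ 2 / 2 ≤ l1Dist (mazurMap u) (mazurMap v) :=
  hasSum_le (fun i => sq_sub_div_two_le_abs_mul_abs_sub (u i) (v i))
    ((hasSum_sq_lp_two (u - v)).div_const 2)
    ((summable_mazurMap u).sub (summable_mazurMap v)).abs.hasSum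

end Mazur

theorem exists_l1_sphere_map_of_posSemidef {X : Type u} {K : Matrix X X ℝ} (hK : K.PosSemidef)
    (hdiag : ∀ x, K x x = 1) :
    ∃ (C : Type u) (F : X → C → ℝ), (∀ x, HasSum (fun c => |F x c|) 1) ∧ ∀ x y,
      1 - K x y ≤ l1Dist (F x) (F y) ∧ l1Dist (F x) (F y) ^ 2 ≤ 8 * (1 - K x y) := by
  obtain ⟨C, ψ, hψ⟩ := exists_lp_inner_eq hK
  have hnorm (x : X) : ‖ψ x‖ = 1 := by
    rw [norm_eq_sqrt_real_inner, hψ, hdiag, Real.sqrt_one]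
  have hsub (x y : X) : ‖ψ x - ψ y‖ ^ 2 = 2 * (1 - K x y) := by
    rw [norm_sub_sq_real, hψ, hnorm, hnorm]
    ring
  refine ⟨C, fun x => mazurMap (ψ x), fun x => ?_, fun x y => ⟨?_, ?_⟩⟩
  · simpa [hnorm] using hasSum_abs_mazurMap (ψ x)
  · linarith [sq_norm_sub_div_two_le_l1Dist_mazurMap (ψ x) (ψ y), hsub x y]
  · calc l1Dist (mazurMap (ψ x)) (mazurMap (ψ y)) ^ 2
        ≤ (‖ψ x - ψ y‖ * (‖ψ x‖ + ‖ψ y‖)) ^ 2 :=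
          pow_le_pow_left₀ (l1Dist_nonneg _ _) (l1Dist_mazurMap_le _ _) 2
      _ = 8 * (1 - K x y) := by rw [mul_pow, hsub, hnorm, hnorm]; ring

theorem exists_l1_sphere_map_of_summable {X : Type u} {A : Type*} {f : X → A → ℝ}
    (hf : ∀ x, Summable (f x)) {t : ℝ} (ht : 0 ≤ t) :
    ∃ (C : Type u) (F : X → C → ℝ), (∀ x, HasSum (fun c => |F x c|) 1) ∧ ∀ x y,
      1 - Real.exp (-(t * l1Dist (f x) (f y))) ≤ l1Dist (F x) (F y) ∧
        l1Dist (F x) (F y) ^ 2 ≤ 8 * (t * l1Dist (f x) (f y)) := by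
  obtain ⟨C, F, hF, hFd⟩ := exists_l1_sphere_map_of_posSemidef
    (posSemidef_exp_neg_mul_l1Dist hf ht) (by simp [l1Dist])
  refine ⟨C, F, hF, fun x y => ⟨(hFd x y).1, (hFd x y).2.trans ?_⟩⟩
  rw [of_apply]
  linarith [Real.one_sub_le_exp_neg (t * l1Dist (f x) (f y))]

section Control

theorem exists_monotone_tendsto_atTop_le {α : Type*} {δ e : α → ℝ} (he : ∀ p, 0 ≤ e p)
    (h : ∀ M, ∃ D, ∀ p, D ≤ δ p → M ≤ e p) :
    ∃ ρ : ℝ → ℝ, Monotone ρ ∧ Tendsto ρ atTop atTop ∧ ∀ p, ρ (δ p) ≤ e p := by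
  let s (t : ℝ) : Set ℝ := insert t (image e {p | t ≤ δ p})
  have hs (t : ℝ) : BddBelow (s t) :=
    BddBelow.insert t ⟨0, forall_mem_image.2 fun p _ => he p⟩
  refine ⟨fun t => sInf (s t), fun t t' htt' => ?_, tendsto_atTop.2 fun M => ?_, fun p => ?_⟩
  · refine le_csInf (insert_nonempty _ _) (forall_mem_insert.2 ⟨?_, forall_mem_image.2 ?_⟩)
    · exact (csInf_le (hs t) (mem_insert _ _)).trans htt'
    · exact fun p hp => csInf_le (hs t) (mem_insert_of_mem _ ⟨p, htt'.trans hp, rfl⟩)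
  · obtain ⟨D, hD⟩ := h M
    filter_upwards [eventually_ge_atTop M, eventually_ge_atTop D] with t hMt hDt
    exact le_csInf (insert_nonempty _ _)
      (forall_mem_insert.2 ⟨hMt, forall_mem_image.2 fun p hp => hD p (hDt.trans hp)⟩)
  · exact csInf_le (hs _) (mem_insert_of_mem _ (mem_image_of_mem e (le_refl (δ p))))

theorem exists_monotone_ge {α : Type*} {δ e : α → ℝ} (h : ∀ R, ∃ M, ∀ p, δ p ≤ R → e p ≤ M) :
    ∃ ρ : ℝ → ℝ, Monotone ρ ∧ ∀ p, e p ≤ ρ (δ p) := by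
  let s (t : ℝ) : Set ℝ := insert 0 (image e {p | δ p ≤ t})
  have hs (t : ℝ) : BddAbove (s t) := by
    obtain ⟨M, hM⟩ := h t
    exact BddAbove.insert 0 ⟨M, forall_mem_image.2 hM⟩
  refine ⟨fun t => sSup (s t), fun t t' htt' => ?_, fun p => ?_⟩
  · exact csSup_le_csSup (hs t') (insert_nonempty _ _)
      (insert_subset_insert (image_mono fun p hp => le_trans hp htt'))
  · exact le_csSup (hs _) (mem_insert_of_mem _ (mem_image_of_mem e (le_refl (δ p))))

theorem coarseEmbedD_of_bounded_of_proper {Y Z : Type} {dY : Y → Y → ℝ} {dZ : Z → Z → ℝ}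
    {f : Y → Z} (hnonneg : ∀ x y, 0 ≤ dZ (f x) (f y))
    (hbdd : ∀ R, ∃ M, ∀ x y, dY x y ≤ R → dZ (f x) (f y) ≤ M)
    (hproper : ∀ M, ∃ D, ∀ x y, D ≤ dY x y → M ≤ dZ (f x) (f y)) : CoarseEmbedD dY dZ f := by
  obtain ⟨ρm, hmono_m, htend, hm⟩ := exists_monotone_tendsto_atTop_le (α := Y × Y)
    (δ := fun p => dY p.1 p.2) (e := fun p => dZ (f p.1) (f p.2)) (fun p => hnonneg p.1 p.2)
    (by simpa only [Prod.forall] using hproper)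
  obtain ⟨ρp, hmono_p, hp⟩ := exists_monotone_ge (α := Y × Y)
    (δ := fun p => dY p.1 p.2) (e := fun p => dZ (f p.1) (f p.2))
    (by simpa only [Prod.forall] using hbdd)
  exact ⟨ρm, ρp, hmono_m, hmono_p, htend, fun x y => ⟨hm (x, y), hp (x, y)⟩⟩

end Control

section Sum

theorem hasSum_sigma_abs_sub {ι : Type*} {C : ι → Type*} {u v : ∀ i, C i → ℝ}
    (hu : ∀ i, Summable (u i)) (hv : ∀ i, Summable (v i))
    (h : Summable fun i => l1Dist (u i) (v i)) :
    HasSum (fun p : Σ i, C i => |u p.1 p.2 - v p.1 p.2|) (∑' i, l1Dist (u i) (v i)) := by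
  have hsum : Summable fun p : Σ i, C i => |u p.1 p.2 - v p.1 p.2| :=
    (summable_sigma_of_nonneg fun _ => abs_nonneg _).2
      ⟨fun i => ((hu i).sub (hv i)).abs, h⟩
  exact hsum.tsum_sigma ▸ hsum.hasSum

theorem summable_and_tsum_le_sum_range_add_tsum {u a b : ℕ → ℝ} {N : ℕ} (hu : ∀ n, 0 ≤ u n)
    (ha : Summable a) (hub : ∀ n, u n ≤ b n) (hua : ∀ n, N ≤ n → u n ≤ a n) :
    Summable u ∧ ∑' n, u n ≤ ∑ n ∈ Finset.range N, b n + ∑' n, a (n + N) := by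
  have ha' : Summable fun n => a (n + N) := (summable_nat_add_iff N).2 ha
  have htail (n : ℕ) : u (n + N) ≤ a (n + N) := hua _ (Nat.le_add_left N n)
  have hu' : Summable fun n => u (n + N) := ha'.of_nonneg_of_le (fun n => hu _) htail
  have husum : Summable u := (summable_nat_add_iff N).1 hu'
  rw [← husum.sum_add_tsum_nat_add N]
  exact ⟨husum, add_le_add (Finset.sum_le_sum fun n _ => hub n) (hu'.tsum_le_tsum htail ha')⟩

variable {X : Type} {d : X → X → ℝ}

theorem exists_coarseEmbedD_l1Dist_of_seq {C : ℕ → Type} {g : ∀ n, X → C n → ℝ} {a b : ℕ → ℝ}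
    (hg : ∀ n x, Summable (g n x)) (ha : Summable a)
    (hbdd : ∀ n x y, l1Dist (g n x) (g n y) ≤ b n)
    (hsmall : ∀ (n : ℕ) x y, d x y ≤ n → l1Dist (g n x) (g n y) ≤ a n)
    (hproper : ∀ M, ∃ D, ∀ x y, D ≤ d x y → ∃ n, M ≤ l1Dist (g n x) (g n y)) :
    ∃ (A : Type) (f : X → A → ℝ), (∀ x, Summable (f x)) ∧ CoarseEmbedD d l1Dist f := by
  rcases isEmpty_or_nonempty X with hX | ⟨⟨x₀⟩⟩
  · exact ⟨Empty, isEmptyElim, isEmptyElim, id, id, monotone_id, monotone_id, tendsto_id,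
      isEmptyElim⟩
  have hle (R : ℝ) (x y : X) (hxy : d x y ≤ R) :=
    summable_and_tsum_le_sum_range_add_tsum (N := ⌈R⌉₊) (fun n => l1Dist_nonneg (g n x) (g n y)) ha
      (fun n => hbdd n x y) fun n hn => hsmall n x y (hxy.trans (Nat.ceil_le.1 hn))
  have hsum (x y : X) := (hle _ x y le_rfl).1
  have hsigma (x y : X) :=
    hasSum_sigma_abs_sub (fun n => hg n x) (fun n => hg n y) (hsum x y)
  let f : X → (Σ n, C n) → ℝ := fun x p => g p.1 x p.2 - g p.1 x₀ p.2
  have hf (x y : X) : l1Dist (f x) (f y) = ∑' n, l1Dist (g n x) (g n y) := by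
    rw [← (hsigma x y).tsum_eq]
    simp only [l1Dist, f, sub_sub_sub_cancel_right]
  refine ⟨Σ n, C n, f, fun x => (hsigma x x₀).summable.of_abs,
    coarseEmbedD_of_bounded_of_proper (fun x y => l1Dist_nonneg _ _) (fun R => ?_) fun M => ?_⟩
  · exact ⟨_, fun x y hxy => (hf x y).trans_le (hle R x y hxy).2⟩
  · obtain ⟨D, hD⟩ := hproper M
    refine ⟨D, fun x y hxy => ?_⟩
    obtain ⟨n, hn⟩ := hD x y hxy
    rw [hf]
    exact hn.trans ((hsum x y).le_tsum n fun _ _ => l1Dist_nonneg _ _)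

theorem exists_strictMono_tendsto_atTop_ge (S : ℕ → ℝ) :
    ∃ t : ℕ → ℝ, StrictMono t ∧ Tendsto t atTop atTop ∧ ∀ n, S n ≤ t n :=
  ⟨fun n => partialSups S n + n,
    (partialSups_monotone S).add_strictMono Nat.strictMono_cast,
    tendsto_atTop_add_left_of_le _ (S 0) (fun n => le_partialSups_of_le S n.zero_le)
      tendsto_natCast_atTop_atTop,
    fun n => (le_partialSups S n).trans (le_add_of_nonneg_right n.cast_nonneg)⟩

theorem exists_coarseEmbedD_l1Dist_of_scales {t : ℕ → ℝ} (ht : StrictMono t)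
    (ht_tendsto : Tendsto t atTop atTop) {c : ℝ} (hc : 0 < c) {C : ℕ → Type}
    {F : ∀ n, X → C n → ℝ} (hF : ∀ n x, HasSum (fun a => |F n x a|) 1)
    (hnear : ∀ (n : ℕ) x y, d x y ≤ n → l1Dist (F n x) (F n y) ≤ (1 / 2) ^ n / (n + 1))
    (hfar : ∀ n x y, t n ≤ d x y → d x y ≤ t (n + 1) → c ≤ l1Dist (F n x) (F n y)) :
    ∃ (A : Type) (f : X → A → ℝ), (∀ x, Summable (f x)) ∧ CoarseEmbedD d l1Dist f := by
  have hpos (n : ℕ) : (0 : ℝ) < n + 1 := n.cast_add_one_pos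
  have hF' (n : ℕ) (x : X) : Summable (F n x) := (hF n x).summable.of_abs
  -- A distant pair may be separated at a single scale only; the weights make that scale suffice.
  let g (n : ℕ) (x : X) : C n → ℝ := ((n : ℝ) + 1) • F n x
  have hg (n : ℕ) (x y : X) : l1Dist (g n x) (g n y) = (n + 1) * l1Dist (F n x) (F n y) := by
    rw [l1Dist_smul, abs_of_pos (hpos n)]
  refine exists_coarseEmbedD_l1Dist_of_seq (g := g) (b := fun n => (n + 1) * 2)
    (fun n x => (hF' n x).mul_left (n + 1 : ℝ)) summable_geometric_two
    (fun n x y => ?_) (fun n x y hxy => ?_) fun M => ?_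
  · rw [hg]
    gcongr
    linarith [l1Dist_le_add (hF' n x) (hF' n y), (hF n x).tsum_eq, (hF n y).tsum_eq]
  · rw [hg, ← le_div_iff₀' (hpos n)]
    exact hnear n x y hxy
  · obtain ⟨k, hk⟩ := exists_nat_ge (M / c)
    refine ⟨t (k + 1), fun x y hxy => ?_⟩
    obtain ⟨m, hm, hm'⟩ := (ht.comp (strictMono_id.const_add k)).exists_between_of_tendsto_atTop
      (ht_tendsto.comp (tendsto_atTop_mono (Nat.le_add_left · k) tendsto_id))
      (x := d x y) ((ht k.lt_succ_self).trans_le hxy)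
    refine ⟨k + m, ?_⟩
    rw [hg]
    calc M ≤ k * c := (div_le_iff₀ hc).1 hk
      _ ≤ ((k + m : ℕ) + 1) * l1Dist (F (k + m) x) (F (k + m) y) := by
        gcongr
        · push_cast
          linarith [m.cast_nonneg (α := ℝ)]
        · exact hfar (k + m) x y hm.le hm'

theorem exists_coarseEmbedD_l1Dist_of_sphere_maps {c : ℝ} (hc : 0 < c)
    (h : ∀ R ε : ℝ, 0 < R → 0 < ε → ∃ S : ℝ, ∀ T, S < T → ∃ (C : Type) (F : X → C → ℝ),
      (∀ x, HasSum (fun a => |F x a|) 1) ∧ (∀ x y, d x y ≤ R → l1Dist (F x) (F y) ≤ ε) ∧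
        ∀ x y, S ≤ d x y → d x y ≤ T → c ≤ l1Dist (F x) (F y)) :
    ∃ (A : Type) (f : X → A → ℝ), (∀ x, Summable (f x)) ∧ CoarseEmbedD d l1Dist f := by
  choose S hS using fun n : ℕ => h (n + 1) ((1 / 2) ^ n / (n + 1)) (by positivity) (by positivity)
  obtain ⟨t, ht, ht_tendsto, hSt⟩ := exists_strictMono_tendsto_atTop_ge S
  choose C F hF hnear hfar using fun n => hS n (t (n + 1)) ((hSt n).trans_lt (ht n.lt_succ_self))
  exact exists_coarseEmbedD_l1Dist_of_scales ht ht_tendsto hc hF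
    (fun n x y hxy => hnear n x y (hxy.trans (le_add_of_nonneg_right zero_le_one)))
    fun n x y hxy => hfar n x y ((hSt n).trans hxy)

end Sum

theorem CoarseEmbedD.exists_l1_sphere_map {X A : Type} {d : X → X → ℝ} {f : X → A → ℝ}
    (hfd : CoarseEmbedD d l1Dist f) (hf : ∀ x, Summable (f x)) (R : ℝ) {ε : ℝ} (hε : 0 < ε) :
    ∃ S : ℝ, 0 < S ∧ ∃ (C : Type) (F : X → C → ℝ), (∀ x, HasSum (fun a => |F x a|) 1) ∧
      (∀ x y, d x y ≤ R → l1Dist (F x) (F y) ≤ ε) ∧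
      ∀ x y, S ≤ d x y → 1 / 2 ≤ l1Dist (F x) (F y) := by
  obtain ⟨ρm, ρp, hmono_m, hmono_p, htend, hρ⟩ := hfd
  obtain ⟨t, ht, htR⟩ := exists_pos_mul_lt (sq_pos_of_pos hε) (8 * ρp R)
  obtain ⟨S, hS, hS_pos⟩ :=
    ((tendsto_atTop.1 htend (1 / t)).and (eventually_gt_atTop (0 : ℝ))).exists
  obtain ⟨C, F, hF, hFd⟩ := exists_l1_sphere_map_of_summable hf ht.le
  refine ⟨S, hS_pos, C, F, hF, fun x y hxy => ?_, fun x y hxy => ?_⟩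
  · refine le_of_sq_le_sq ?_ hε.le
    calc l1Dist (F x) (F y) ^ 2 ≤ 8 * (t * l1Dist (f x) (f y)) := (hFd x y).2
      _ ≤ 8 * (t * ρp R) := by
        gcongr
        exact (hρ x y).2.trans (hmono_p hxy)
      _ ≤ ε ^ 2 := by linarith
  · have hone : 1 ≤ t * l1Dist (f x) (f y) :=
      (div_le_iff₀' ht).1 (hS.trans ((hmono_m hxy).trans (hρ x y).1))
    have hexp : Real.exp (-(t * l1Dist (f x) (f y))) ≤ 1 / 2 :=
      (Real.exp_le_exp.2 (neg_le_neg hone)).trans Real.exp_neg_one_lt_half.le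
    linarith [(hFd x y).1]

theorem stmt7_general {X : Type} (d : X → X → ℝ) :
    (∃ (A : Type) (f : X → A → ℝ), (∀ x, Summable fun a => |f x a|) ∧
      CoarseEmbedD d (fun u v => ∑' a, |u a - v a|) f) ↔
    (∃ c : ℝ, 0 < c ∧ ∀ R ε : ℝ, 0 < R → 0 < ε → ∃ S : ℝ, 0 < S ∧ ∀ T : ℝ, S < T →
      ∃ (C : Type) (f : X → C → ℝ),
        (∀ x, Summable fun cc => |f x cc|) ∧
        (∀ x, (∑' cc, |f x cc|) = 1) ∧
        (∀ x y : X, d x y ≤ R → (∑' cc, |f x cc - f y cc|) ≤ ε) ∧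
        (∀ x y : X, S ≤ d x y → d x y ≤ T →
          c ≤ ∑' cc, |f x cc - f y cc|)) := by
  constructor
  · rintro ⟨A, f, hf, hfd⟩
    refine ⟨1 / 2, one_half_pos, fun R ε _ hε => ?_⟩
    obtain ⟨S, hS, C, F, hF, hnear, hfar⟩ :=
      hfd.exists_l1_sphere_map (fun x => (hf x).of_abs) R hε
    exact ⟨S, hS, fun T _ => ⟨C, F, fun x => (hF x).summable, fun x => (hF x).tsum_eq, hnear,
      fun x y hxy _ => hfar x y hxy⟩⟩
  · rintro ⟨c, hc, h⟩
    obtain ⟨A, f, hf, hfd⟩ := exists_coarseEmbedD_l1Dist_of_sphere_maps hc fun R ε hR hε => by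
      obtain ⟨S, -, hS⟩ := h R ε hR hε
      refine ⟨S, fun T hT => ?_⟩
      obtain ⟨C, F, hF, hF_one, hnear, hfar⟩ := hS T hT
      exact ⟨C, F, fun x => (hF x).hasSum_iff.2 (hF_one x), hnear, hfar⟩
    exact ⟨A, f, fun x => (hf x).abs, hfd⟩

/-- A pseudo-metric space `X` coarsely embeds in `ℓ¹(A)` for some set `A` iff
there is `c > 0` such that for all `R, ε > 0` there is `S > 0` so that for any `T > S`
there are a set `C` and a map `f` from `X` to the unit sphere of `ℓ¹(C)` with
`‖f(x)−f(y)‖₁ ≤ ε` whenever `d(x,y) ≤ R` and `‖f(x)−f(y)‖₁ ≥ c` whenever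
`S ≤ d(x,y) ≤ T`. -/
theorem stmt7 {X : Type} [PseudoMetricSpace X] :
    (∃ (A : Type) (f : X → A → ℝ), (∀ x, Summable fun a => |f x a|) ∧
      CoarseEmbedD (fun x y : X => dist x y) (fun u v => ∑' a, |u a - v a|) f) ↔
    (∃ c : ℝ, 0 < c ∧ ∀ R ε : ℝ, 0 < R → 0 < ε → ∃ S : ℝ, 0 < S ∧ ∀ T : ℝ, S < T →
      ∃ (C : Type) (f : X → C → ℝ),
        (∀ x, Summable fun cc => |f x cc|) ∧
        (∀ x, (∑' cc, |f x cc|) = 1) ∧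
        (∀ x y : X, dist x y ≤ R → (∑' cc, |f x cc - f y cc|) ≤ ε) ∧
        (∀ x y : X, S ≤ dist x y → dist x y ≤ T →
          c ≤ ∑' cc, |f x cc - f y cc|)) :=
  stmt7_general dist
end

section
/- Let X be an ∞-pseudo-metric space with asymptotic property C: for every sequence {R_i}_{i≥1} of positive real numbers there exist a natural number n and a decomposition X = ⋃_{i=1}^n X_i such that each X_i is the union of an R_i-disjoint family of subsets of X that is uniformly bounded. Then X is exact: for every R, ε > 0 there is an (ε,R)-continuous partition of unity on X whose strata are uniformly bounded. -/
open scoped ENNReal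

/-!
Given `R` and `ε`, apply property C to the scales `R + 2 rᵢ` with `rᵢ = (4R/ε) 2ⁱ`. The thickened
indicator of `Xᵢ` at radius `rᵢ` is `rᵢ⁻¹`-Lipschitz, so two points at distance at most `R` are
separated by these functions by a total of at most `∑ R / rᵢ ≤ ε / 2`, *whatever the number of
pieces*. Their sum is at least `1` since the pieces cover, hence normalizing at most doubles this
bound. The `rᵢ`-neighbourhoods of the members of the `i`-th family are more than `R` apart, so
cutting the `i`-th function along them bounds its strata without changing `ℓ¹` distances between
points at distance at most `R`.
-/

section

open Set Metric

universe u

variable {ι S : Type*} {κ : ι → Type*} {X : Type u}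

theorem hasSum_sigma_of_nonneg {f : (Σ i, κ i) → ℝ} {g : ι → ℝ} {a : ℝ} (hf : ∀ p, 0 ≤ f p)
    (hfg : ∀ i, HasSum (fun k ↦ f ⟨i, k⟩) (g i)) (hg : HasSum g a) : HasSum f a := by
  refine hg.sigma_of_hasSum hfg ((summable_sigma_of_nonneg hf).2 ⟨fun i ↦ (hfg i).summable, ?_⟩)
  simpa only [(hfg _).tsum_eq] using hg.summable

/-- The case `Φ a b = a` sums the pieces of `g`, and `Φ a b = |a - b|` computes `ℓ¹` distances. -/
theorem hasSum_indicator_indicator {K M N : Type*} [Zero M] [AddCommMonoid N] [TopologicalSpace N]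
    {G : K → Set X} {g : X → M} (x y : X) {Φ : M → M → N} (hΦ : Φ 0 0 = 0)
    (hg : Function.support g ⊆ ⋃ k, G k) (hG : {k | x ∈ G k ∨ y ∈ G k}.Subsingleton) :
    HasSum (fun k ↦ Φ ((G k).indicator g x) ((G k).indicator g y)) (Φ (g x) (g y)) := by
  by_cases hne : ∃ k, x ∈ G k ∨ y ∈ G k
  · obtain ⟨k, hk⟩ := hne
    have off_piece : ∀ l ≠ k, x ∉ G l ∧ y ∉ G l := fun l hl ↦
      not_or.1 fun h ↦ hl (hG h hk)
    have on_piece : ∀ z, (z = x ∨ z = y) → (G k).indicator g z = g z := by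
      intro z hz
      refine indicator_apply_eq_self.2 fun hzk ↦ Function.notMem_support.1 fun hgz ↦ ?_
      obtain ⟨l, hl⟩ := mem_iUnion.1 (hg hgz)
      have hlk : l = k := hG (by rcases hz with rfl | rfl <;> simp [hl]) hk
      exact hzk (hlk ▸ hl)
    rw [← on_piece x (.inl rfl), ← on_piece y (.inr rfl)]
    refine hasSum_single k fun l hl ↦ ?_
    simp only [indicator_of_notMem (off_piece l hl).1, indicator_of_notMem (off_piece l hl).2, hΦ]
  · push Not at hne
    have g_eq_zero : ∀ z, (∀ k, z ∉ G k) → g z = 0 := fun z hz ↦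
      Function.notMem_support.1 fun h ↦ by simpa [hz] using hg h
    simp [g_eq_zero x fun k ↦ (hne k).1, g_eq_zero y fun k ↦ (hne k).2, hne, hΦ, hasSum_zero]

theorem sum_abs_div_sum_sub_div_sum_le {𝕜 : Type*} [Field 𝕜] [LinearOrder 𝕜] [IsStrictOrderedRing 𝕜]
    {s : Finset ι} {a b : ι → 𝕜} (hb : ∀ i ∈ s, 0 ≤ b i) (ha_sum : 0 < ∑ i ∈ s, a i)
    (hb_sum : 0 < ∑ i ∈ s, b i) :
    ∑ i ∈ s, |a i / (∑ j ∈ s, a j) - b i / ∑ j ∈ s, b j|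
      ≤ 2 * (∑ i ∈ s, |a i - b i|) / ∑ i ∈ s, a i := by
  set A := ∑ i ∈ s, a i
  set B := ∑ i ∈ s, b i
  have hAB : |B - A| ≤ ∑ i ∈ s, |a i - b i| := by
    rw [abs_sub_comm, ← Finset.sum_sub_distrib]
    exact Finset.abs_sum_le_sum_abs _ _
  have hterm : ∀ i ∈ s, |a i / A - b i / B| ≤ |a i - b i| / A + b i / B * (|B - A| / A) := by
    intro i hi
    calc |a i / A - b i / B| = |(a i - b i) / A + b i / B * ((B - A) / A)| := by
          congr 1; field_simp; ring
      _ ≤ |(a i - b i) / A| + |b i / B * ((B - A) / A)| := abs_add_le _ _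
      _ = |a i - b i| / A + b i / B * (|B - A| / A) := by
          rw [abs_mul, abs_div, abs_div (B - A), abs_of_pos ha_sum,
            abs_of_nonneg (div_nonneg (hb i hi) hb_sum.le)]
  calc ∑ i ∈ s, |a i / A - b i / B|
      ≤ ∑ i ∈ s, (|a i - b i| / A + b i / B * (|B - A| / A)) := Finset.sum_le_sum hterm
    _ = (∑ i ∈ s, |a i - b i|) / A + |B - A| / A := by
        rw [Finset.sum_add_distrib, ← Finset.sum_div, ← Finset.sum_mul, ← Finset.sum_div,
          div_self hb_sum.ne', one_mul]
    _ ≤ (∑ i ∈ s, |a i - b i|) / A + (∑ i ∈ s, |a i - b i|) / A := by gcongr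
    _ = 2 * (∑ i ∈ s, |a i - b i|) / A := by ring

theorem sum_div_geometric_le {R ε : ℝ} (hR : 0 < R) (hε : 0 < ε) (n : ℕ) :
    ∑ i : Fin n, R / (4 * R / ε * 2 ^ (i : ℕ)) ≤ ε / 2 := by
  calc ∑ i : Fin n, R / (4 * R / ε * 2 ^ (i : ℕ)) = ∑ i : Fin n, ε / 4 * (1 / 2) ^ (i : ℕ) := by
        refine Finset.sum_congr rfl fun i _ ↦ ?_
        rw [one_div_pow]
        field_simp
    _ = ε / 4 * ∑ i ∈ Finset.range n, (1 / 2) ^ i := by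
        rw [← Finset.mul_sum, Fin.sum_univ_eq_sum_range (fun i ↦ (1 / 2 : ℝ) ^ i)]
    _ ≤ ε / 4 * 2 := by gcongr; exact sum_geometric_two_le n
    _ = ε / 2 := by ring

/-- A partition of unity `φ` on `X` indexed by `S`, regarded as a map `X → ℓ¹(S)`; no continuity
is required. -/
structure IsPartitionOfUnity (φ : S → X → ℝ) : Prop where
  mem_Icc : ∀ s x, φ s x ∈ Icc 0 1
  hasSum_one : ∀ x, HasSum (fun s ↦ φ s x) 1

theorem IsPartitionOfUnity.of_nonneg {φ : S → X → ℝ} (h_nonneg : ∀ s x, 0 ≤ φ s x)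
    (h_sum : ∀ x, HasSum (fun s ↦ φ s x) 1) : IsPartitionOfUnity φ where
  mem_Icc s x := ⟨h_nonneg s x, le_hasSum (h_sum x) s fun t _ ↦ h_nonneg t x⟩
  hasSum_one := h_sum

/-- The family obtained by cutting each function `ψ i` along the sets `G i k`. It is used to
replace the strata of a partition of unity by smaller ones. -/
noncomputable def cutAlong (G : ∀ i, κ i → Set X) (ψ : ι → X → ℝ) (p : Σ i, κ i) : X → ℝ :=
  (G p.1 p.2).indicator (ψ p.1)

section cutAlong

variable {G : ∀ i, κ i → Set X} {ψ : ι → X → ℝ}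

theorem support_cutAlong_subset (p : Σ i, κ i) :
    Function.support (cutAlong G ψ p) ⊆ G p.1 p.2 :=
  support_indicator_subset

theorem IsPartitionOfUnity.cutAlong (hψ : IsPartitionOfUnity ψ)
    (hsupp : ∀ i, Function.support (ψ i) ⊆ ⋃ k, G i k)
    (hG : ∀ i x, {k | x ∈ G i k}.Subsingleton) : IsPartitionOfUnity (cutAlong G ψ) := by
  have h_nonneg : ∀ (p : Σ i, κ i) x, 0 ≤ (G p.1 p.2).indicator (ψ p.1) x := fun p x ↦
    indicator_nonneg (fun z _ ↦ (hψ.mem_Icc p.1 z).1) x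
  refine .of_nonneg h_nonneg fun x ↦ hasSum_sigma_of_nonneg (h_nonneg · x) (fun i ↦ ?_)
    (hψ.hasSum_one x)
  exact hasSum_indicator_indicator x x (Φ := fun a _ ↦ a) rfl (hsupp i)
    (by simpa only [or_self] using hG i x)

theorem hasSum_abs_cutAlong_sub (x y : X) {c : ℝ}
    (hsupp : ∀ i, Function.support (ψ i) ⊆ ⋃ k, G i k)
    (hG : ∀ i, {k | x ∈ G i k ∨ y ∈ G i k}.Subsingleton)
    (hψ : HasSum (fun i ↦ |ψ i x - ψ i y|) c) :
    HasSum (fun p ↦ |cutAlong G ψ p x - cutAlong G ψ p y|) c := by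
  refine hasSum_sigma_of_nonneg (fun _ ↦ abs_nonneg _) (fun i ↦ ?_) hψ
  simp only [cutAlong]
  exact hasSum_indicator_indicator x y (Φ := fun a b ↦ |a - b|) (by simp) (hsupp i) (hG i)

end cutAlong

variable [PseudoEMetricSpace X]

/-- An `R`-disjoint family of subsets: points of distinct members are at distance at least `R`. -/
def IsDisjointAtScale (R : ℝ) (F : Set (Set X)) : Prop :=
  ∀ A ∈ F, ∀ B ∈ F, A ≠ B → ∀ x ∈ A, ∀ y ∈ B, ENNReal.ofReal R ≤ edist x y

/-- Asymptotic property C. The scale sequence is indexed from `0`, and a single `D` bounds the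
diameters in all of the finitely many families. -/
def AsymptoticPropertyC (X : Type u) [PseudoEMetricSpace X] : Prop :=
  ∀ R : ℕ → ℝ, (∀ i, 0 < R i) → ∃ (n : ℕ) (F : Fin n → Set (Set X)) (D : ℝ), 0 < D ∧
    (⋃ i, ⋃₀ F i) = univ ∧ (∀ i : Fin n, IsDisjointAtScale (R i) (F i)) ∧
    ∀ i, ∀ A ∈ F i, ediam A ≤ ENNReal.ofReal D

/-- `(ε, R)`-continuity of `φ` as a map to `ℓ¹(S)`. The sum is `0` by convention when it diverges,
which does not happen for a partition of unity. -/
def IsContinuousAtScale (ε R : ℝ) (φ : S → X → ℝ) : Prop :=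
  ∀ x y, edist x y ≤ ENNReal.ofReal R → ∑' s, |φ s x - φ s y| ≤ ε

/-- A uniformly bounded indexed family of subsets, used for the strata of a partition of unity. -/
def IsUniformlyBounded (G : S → Set X) : Prop :=
  ∃ D : ℝ, 0 < D ∧ ∀ s, ediam (G s) ≤ ENNReal.ofReal D

/-- Exactness of `X`, in the sense of partitions of unity. -/
def IsExactSpace (X : Type u) [PseudoEMetricSpace X] : Prop :=
  ∀ R ε : ℝ, 0 < R → 0 < ε → ∃ (S : Type u) (φ : S → X → ℝ),
    IsPartitionOfUnity φ ∧ IsContinuousAtScale ε R φ ∧ IsUniformlyBounded fun s ↦ {x | 0 < φ s x}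

theorem IsUniformlyBounded.mono {G H : S → Set X} (hH : IsUniformlyBounded H)
    (hGH : ∀ s, G s ⊆ H s) : IsUniformlyBounded G :=
  let ⟨D, hD, hdiam⟩ := hH
  ⟨D, hD, fun s ↦ (ediam_mono (hGH s)).trans (hdiam s)⟩

theorem isUniformlyBounded_thickening [Finite ι] {G : ∀ i, κ i → Set X} {r : ι → ℝ}
    (hr : ∀ i, 0 ≤ r i) (hG : IsUniformlyBounded fun p : Σ i, κ i ↦ G p.1 p.2) :
    IsUniformlyBounded fun p : Σ i, κ i ↦ thickening (r p.1) (G p.1 p.2) := by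
  have := Fintype.ofFinite ι
  obtain ⟨D, hD, hdiam⟩ := hG
  have h_sum : 0 ≤ ∑ i, r i := Finset.sum_nonneg fun i _ ↦ hr i
  refine ⟨D + 2 * ∑ i, r i, by positivity, fun ⟨i, k⟩ ↦ ?_⟩
  lift r to ι → NNReal using hr
  calc ediam (thickening (r i) (G i k)) ≤ ediam (G i k) + 2 * r i := ediam_thickening_le _
    _ ≤ ENNReal.ofReal D + 2 * (∑ i, r i : NNReal) := by
        gcongr
        · exact hdiam ⟨i, k⟩
        · exact Finset.single_le_sum (fun _ _ ↦ zero_le) (Finset.mem_univ i)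
    _ = ENNReal.ofReal (D + 2 * ∑ i, (r i : ℝ)) := by
        rw [ENNReal.ofReal_add hD.le (by positivity), ENNReal.ofReal_mul zero_le_two,
          ← NNReal.coe_sum, ENNReal.ofReal_coe_nnreal, ENNReal.ofReal_ofNat]

namespace IsDisjointAtScale

variable {F : Set (Set X)} {R r : ℝ} {x y : X}

theorem eq_of_mem_thickening (hF : IsDisjointAtScale (R + 2 * r) F) (hR : 0 ≤ R)
    {A B : Set X} (hA : A ∈ F) (hB : B ∈ F) (hxA : x ∈ thickening r A) (hyB : y ∈ thickening r B)
    (hxy : edist x y ≤ ENNReal.ofReal R) : A = B := by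
  obtain ⟨a, ha, hxa⟩ := (mem_thickening_iff_exists_edist_lt _ _).1 hxA
  obtain ⟨b, hb, hyb⟩ := (mem_thickening_iff_exists_edist_lt _ _).1 hyB
  have hr : 0 < r := ENNReal.ofReal_pos.1 (pos_of_gt hxa)
  by_contra hAB
  refine (hF A hA B hB hAB a ha b hb).not_gt ?_
  calc edist a b ≤ edist a x + edist x y + edist y b := edist_triangle4 _ _ _ _
    _ < ENNReal.ofReal r + ENNReal.ofReal R + ENNReal.ofReal r := by
        rw [edist_comm a x]
        have h := ENNReal.add_lt_add_of_lt_of_le (hxy.trans_lt ENNReal.ofReal_lt_top).ne hxa hxy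
        exact ENNReal.add_lt_add h hyb
    _ = ENNReal.ofReal (R + 2 * r) := by
        rw [← ENNReal.ofReal_add hr.le hR, ← ENNReal.ofReal_add (by positivity) hr.le]
        ring_nf

theorem subsingleton_thickening (hF : IsDisjointAtScale (R + 2 * r) F) (hR : 0 ≤ R)
    (hxy : edist x y ≤ ENNReal.ofReal R) :
    {A : F | x ∈ thickening r A.1 ∨ y ∈ thickening r A.1}.Subsingleton := by
  rintro A (hA | hA) B (hB | hB) <;>
    refine Subtype.ext (hF.eq_of_mem_thickening hR A.2 B.2 hA hB ?_)
  · simp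
  · exact hxy
  · rwa [edist_comm]
  · simp

end IsDisjointAtScale

theorem abs_thickenedIndicator_sub_le {r R : ℝ} (hr : 0 < r) (hR : 0 ≤ R) (U : Set X) {x y : X}
    (hxy : edist x y ≤ ENNReal.ofReal R) :
    |(thickenedIndicator hr U x : ℝ) - thickenedIndicator hr U y| ≤ R / r := by
  have h := (lipschitzWith_thickenedIndicator hr U).edist_le_mul_of_le hxy
  rw [edist_dist, NNReal.dist_eq, ENNReal.ofReal, ENNReal.ofReal, ← ENNReal.coe_mul,
    ENNReal.coe_le_coe, Real.toNNReal_le_iff_le_coe] at h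
  simpa [hr.le, hR, div_eq_inv_mul] using h

/-- The thickened indicators of the sets `U i` at radii `r i`, divided by their sum: a partition of
unity as soon as the `U i` cover. -/
noncomputable def normalizedThickenedIndicator [Fintype ι] {r : ι → ℝ} (hr : ∀ i, 0 < r i)
    (U : ι → Set X) (i : ι) (x : X) : ℝ :=
  thickenedIndicator (hr i) (U i) x / ∑ j, (thickenedIndicator (hr j) (U j) x : ℝ)

section normalizedThickenedIndicator

variable [Fintype ι] {r : ι → ℝ} (hr : ∀ i, 0 < r i) {U : ι → Set X}

theorem one_le_sum_thickenedIndicator (hU : ⋃ i, U i = univ) (x : X) :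
    1 ≤ ∑ i, (thickenedIndicator (hr i) (U i) x : ℝ) := by
  obtain ⟨i, hi⟩ := mem_iUnion.1 (hU ▸ mem_univ x)
  calc (1 : ℝ) = thickenedIndicator (hr i) (U i) x := by simp [thickenedIndicator_one (hr i) _ hi]
    _ ≤ _ := Finset.single_le_sum (f := fun i ↦ (thickenedIndicator (hr i) (U i) x : ℝ))
        (fun _ _ ↦ NNReal.coe_nonneg _) (Finset.mem_univ i)

theorem isPartitionOfUnity_normalizedThickenedIndicator (hU : ⋃ i, U i = univ) :
    IsPartitionOfUnity (normalizedThickenedIndicator hr U) := by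
  refine .of_nonneg (fun i x ↦ by unfold normalizedThickenedIndicator; positivity) fun x ↦ ?_
  convert hasSum_fintype fun i ↦ normalizedThickenedIndicator hr U i x
  have h_sum := one_le_sum_thickenedIndicator hr hU x
  simp only [normalizedThickenedIndicator]
  rw [← Finset.sum_div, div_self (by positivity)]

theorem support_normalizedThickenedIndicator_subset (i : ι) :
    Function.support (normalizedThickenedIndicator hr U i) ⊆ thickening (r i) (U i) := by
  refine Function.support_subset_iff'.2 fun x hx ↦ ?_
  simp [normalizedThickenedIndicator, thickenedIndicator_zero (hr i) _ hx]

theorem sum_abs_normalizedThickenedIndicator_sub_le (hU : ⋃ i, U i = univ) {R : ℝ} (hR : 0 ≤ R)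
    {x y : X} (hxy : edist x y ≤ ENNReal.ofReal R) :
    ∑ i, |normalizedThickenedIndicator hr U i x - normalizedThickenedIndicator hr U i y|
      ≤ 2 * ∑ i, R / r i := by
  have hx := one_le_sum_thickenedIndicator hr hU x
  have hy := one_le_sum_thickenedIndicator hr hU y
  calc _ ≤ 2 * (∑ i, |(thickenedIndicator (hr i) (U i) x : ℝ) - thickenedIndicator (hr i) (U i) y|)
        / ∑ i, (thickenedIndicator (hr i) (U i) x : ℝ) :=
        sum_abs_div_sum_sub_div_sum_le (fun _ _ ↦ NNReal.coe_nonneg _) (by positivity)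
          (by positivity)
    _ ≤ 2 * ∑ i, |(thickenedIndicator (hr i) (U i) x : ℝ) - thickenedIndicator (hr i) (U i) y| :=
        div_le_self (by positivity) hx
    _ ≤ 2 * ∑ i, R / r i := by
        gcongr with i
        exact abs_thickenedIndicator_sub_le (hr i) hR (U i) hxy

end normalizedThickenedIndicator

theorem exists_isPartitionOfUnity_of_cover [Fintype ι] {F : ι → Set (Set X)} {r : ι → ℝ} {R : ℝ}
    (hr : ∀ i, 0 < r i) (hR : 0 ≤ R) (hcover : ⋃ i, ⋃₀ F i = univ)
    (hdisj : ∀ i, IsDisjointAtScale (R + 2 * r i) (F i)) :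
    ∃ φ : (Σ i, F i) → X → ℝ, IsPartitionOfUnity φ ∧
      IsContinuousAtScale (2 * ∑ i, R / r i) R φ ∧
      ∀ p, Function.support (φ p) ⊆ thickening (r p.1) p.2 := by
  let ψ := normalizedThickenedIndicator hr fun i ↦ ⋃₀ F i
  let G : ∀ i, F i → Set X := fun i A ↦ thickening (r i) A
  have hψ : IsPartitionOfUnity ψ := isPartitionOfUnity_normalizedThickenedIndicator hr hcover
  have hsupp : ∀ i, Function.support (ψ i) ⊆ ⋃ A, G i A := fun i ↦ by
    rw [← thickening_iUnion, ← sUnion_eq_iUnion]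
    exact support_normalizedThickenedIndicator_subset hr i
  have hsep : ∀ x y, edist x y ≤ ENNReal.ofReal R →
      ∀ i, {A | x ∈ G i A ∨ y ∈ G i A}.Subsingleton := fun x y hxy i ↦
    (hdisj i).subsingleton_thickening hR hxy
  refine ⟨cutAlong G ψ, hψ.cutAlong hsupp fun i x ↦ ?_, fun x y hxy ↦ ?_, support_cutAlong_subset⟩
  · simpa only [or_self] using hsep x x (by simp) i
  · rw [(hasSum_abs_cutAlong_sub x y hsupp (hsep x y hxy) (hasSum_fintype _)).tsum_eq]
    exact sum_abs_normalizedThickenedIndicator_sub_le hr hcover hR hxy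

theorem stmt10_general (hC : AsymptoticPropertyC X) : IsExactSpace X := by
  intro R ε hR hε
  let r : ℕ → ℝ := fun i ↦ 4 * R / ε * 2 ^ i
  have hr : ∀ i, 0 < r i := fun i ↦ by positivity
  obtain ⟨n, F, D, hD, hcover, hdisj, hdiam⟩ := hC (fun i ↦ R + 2 * r i) fun i ↦
    add_pos hR (mul_pos two_pos (hr i))
  obtain ⟨φ, hφ, hcont, hsupp⟩ :=
    exists_isPartitionOfUnity_of_cover (fun i : Fin n ↦ hr i) hR.le hcover hdisj
  have hbdd : IsUniformlyBounded fun p : Σ i, F i ↦ thickening (r p.1) p.2.1 :=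
    isUniformlyBounded_thickening (r := fun i : Fin n ↦ r i) (G := fun i (A : F i) ↦ A.1)
      (fun i ↦ (hr i).le) ⟨D, hD, fun p ↦ hdiam p.1 p.2 p.2.2⟩
  refine ⟨Σ i, F i, φ, hφ, fun x y hxy ↦ (hcont x y hxy).trans ?_,
    hbdd.mono fun p x hx ↦ hsupp p hx.ne'⟩
  linarith [sum_div_geometric_le hR hε n]

end

/-- If an ∞-pseudo-metric space `X` has asymptotic property C (for every
sequence `{R_i}` of positive reals there is a finite decomposition `X = ⋃_{i=1}^n X_i`
with each `X_i` the union of an `R_i`-disjoint uniformly bounded family), then `X` is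
exact: for every `R, ε > 0` there is an `(ε,R)`-continuous partition of unity on `X`
whose strata are uniformly bounded. -/
theorem stmt10 {X : Type} [PseudoEMetricSpace X]
    (hC : ∀ R : ℕ → ℝ, (∀ i, 0 < R i) →
      ∃ (n : ℕ) (F : Fin n → Set (Set X)) (D : ℝ), 0 < D ∧
        (⋃ i, ⋃₀ F i) = Set.univ ∧
        (∀ i : Fin n, ∀ A ∈ F i, ∀ B ∈ F i, A ≠ B → ∀ x ∈ A, ∀ y ∈ B,
          ENNReal.ofReal (R i.val) ≤ edist x y) ∧
        (∀ i, ∀ A ∈ F i, EMetric.diam A ≤ ENNReal.ofReal D)) :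
    ∀ R ε : ℝ, 0 < R → 0 < ε → ∃ (S : Type) (φ : S → X → ℝ),
      (∀ s x, 0 ≤ φ s x ∧ φ s x ≤ 1) ∧
      (∀ x, HasSum (fun s => φ s x) 1) ∧
      (∀ x y : X, edist x y ≤ ENNReal.ofReal R → (∑' s, |φ s x - φ s y|) ≤ ε) ∧
      (∃ D : ℝ, 0 < D ∧ ∀ s, EMetric.diam {x | 0 < φ s x} ≤ ENNReal.ofReal D) := fun R ε hR hε ↦
  let ⟨S, φ, hφ, hcont_bdd⟩ := stmt10_general hC R ε hR hε
  ⟨S, φ, hφ.mem_Icc, hφ.hasSum_one, hcont_bdd⟩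
end
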